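/- Let A ⊆ ℕ be a maximal c.e. set and let B be a c.e. set with B ⊊ A. Then (E_A)⁺ < (E_B)⁺: (E_A)⁺ is computably reducible to (E_B)⁺ but (E_B)⁺ is not computably reducible to (E_A)⁺. In particular, E_A is not high for the computable FS-jump, i.e., (E_A)⁺ is not computably bireducible with =^{ce}. -/

import Mathlib

/-- The `e`-th partial computable function. -/
def phi (e : ℕ) : ℕ →. ℕ :=
  Nat.Partrec.Code.eval (Denumerable.ofNat Nat.Partrec.Code e)

/-- `W_e`, the `e`-th c.e. set: the domain of `φ_e`. -/
def WSet (e : ℕ) : Set ℕ := (phi e).Dom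

/-- The `E`-equivalence class of `k`. -/
def classOf (E : ℕ → ℕ → Prop) (k : ℕ) : Set ℕ := {x | E k x}

/-- Computable reducibility of binary relations on ℕ. -/
def Reduces (E F : ℕ → ℕ → Prop) : Prop :=
  ∃ f : ℕ → ℕ, Computable f ∧ ∀ m n, E m n ↔ F (f m) (f n)

/-- The computable FS-jump of `E`: `e E⁺ e'` iff the set of `E`-classes of elements
of `ran φ_e` equals the set of `E`-classes of elements of `ran φ_{e'}`. -/
def FSJump (E : ℕ → ℕ → Prop) : ℕ → ℕ → Prop :=
  fun e e' => classOf E '' (phi e).ran = classOf E '' (phi e').ran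

/-- Equality of c.e. sets: `e =^{ce} e'` iff `W_e = W_{e'}`. -/
def eqCE : ℕ → ℕ → Prop := fun e e' => WSet e = WSet e'

/-- A set is c.e. if it is `W_e` for some `e`. -/
def CeSet (S : Set ℕ) : Prop := ∃ e : ℕ, S = WSet e

/-- `E_A`: `m E_A n` iff `m = n` or both `m, n ∈ A`. -/
def EA (A : Set ℕ) : ℕ → ℕ → Prop :=
  fun m n => m = n ∨ (m ∈ A ∧ n ∈ A)

/-- A c.e. set `A` is maximal if its complement is infinite and for every c.e. `W`,
either `W \ A` or `Wᶜ \ A` is finite. -/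
def MaximalSet (A : Set ℕ) : Prop :=
  CeSet A ∧ Aᶜ.Infinite ∧ ∀ W : Set ℕ, CeSet W → (W \ A).Finite ∨ (Wᶜ \ A).Finite

/-!
A reduction of `(E_B)⁺` to `(E_A)⁺` induces, by the Rice–Shapiro theorem, an enumeration operator
`Γ` on sets with `E_A`-saturated values that is injective on c.e. sets up to `E_B`-saturation. Since
`A` is maximal, every c.e. property holds for almost all or almost no `x ∉ A`; apply this to
`x ∈ Γ {x}ᶜ`.

If it fails for almost all `x ∉ A`, then `Γ` maps the subsets of some finite set with `k + 2`
elements, at most one of them in `B`, to saturated sets determined by `k + 1` bits, contradicting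
injectivity. If it holds for almost all `x ∉ A`, a greedy enumeration combined with maximality
yields a bound beyond which all `x, z ∉ A` satisfy `z ∈ Γ {x}ᶜ`. By compactness of `Γ`, omitting a
large `x` loses none of the remaining finitely many elements either, so `Γ {x}ᶜ = Γ univ`, again
contradicting injectivity. That `E_A` is not high is the case `B = ∅`.
-/
open Filter Set
open Nat.Partrec (Code)

section RecursivelyEnumerable

variable {α β : Type*} [Primcodable α] [Primcodable β]

theorem rePred_comp {p : β → Prop} (hp : REPred p) {f : α → β} (hf : Computable f) :
    REPred fun a => p (f a) :=
  Partrec.comp hp hf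

theorem rePred_exists_of_primrecRel {q : α → ℕ → Prop} (hq : PrimrecRel q) :
    REPred fun a => ∃ s, q a s := by
  classical
  have hsearch : Partrec fun a => Nat.rfind fun s => Part.some (decide (q a s)) :=
    Partrec.rfind hq.decide.to_comp.partrec
  refine hsearch.dom_re.of_eq fun a => Nat.rfind_dom.trans ?_
  simp only [Part.mem_some_iff, Part.some_dom, implies_true, and_true, true_eq_decide_iff]

/-- A primitive recursive approximation in stages of the predicate `p`: no stage is ever wrong, and
if `p a` holds then all but finitely many stages confirm it. -/
structure StageApprox (p : α → Prop) (q : α → ℕ → Prop) : Prop where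
  primrecRel : PrimrecRel q
  sound : ∀ {a s}, q a s → p a
  eventually : ∀ {a}, p a → ∀ᶠ s in atTop, q a s

theorem exists_stageApprox {p : α → Prop} (hp : REPred p) : ∃ q, StageApprox p q := by
  obtain ⟨c, hc⟩ := Code.exists_code.1 hp
  have hdom : ∀ a, (c.eval (Encodable.encode a)).Dom ↔ p a := fun a => by
    simp [hc, Part.dom_iff_mem]
  refine ⟨fun a s => (c.evaln s (Encodable.encode a)).isSome = true, ?_, ?_, ?_⟩
  · refine Primrec.eq.comp (Primrec.option_isSome.comp ?_) (Primrec.const true)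
    exact Code.primrec_evaln.comp
      ((Primrec.snd.pair (Primrec.const c)).pair (Primrec.encode.comp Primrec.fst))
  · intro a s hs
    obtain ⟨y, hy⟩ := Option.isSome_iff_exists.1 hs
    exact (hdom a).1 (Part.dom_iff_mem.2 ⟨y, Code.evaln_sound hy⟩)
  · intro a ha
    obtain ⟨y, hy⟩ := Part.dom_iff_mem.1 ((hdom a).2 ha)
    obtain ⟨k, hk⟩ := Code.evaln_complete.1 hy
    filter_upwards [eventually_ge_atTop k] with s hs
    exact Option.isSome_iff_exists.2 ⟨y, Code.evaln_mono hs hk⟩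

theorem StageApprox.iff_exists {p : α → Prop} {q : α → ℕ → Prop} (hq : StageApprox p q) (a : α) :
    p a ↔ ∃ s, q a s :=
  ⟨fun ha => (hq.eventually ha).exists, fun ⟨_, hs⟩ => hq.sound hs⟩

theorem rePred_and {p p' : α → Prop} (hp : REPred p) (hp' : REPred p') :
    REPred fun a => p a ∧ p' a := by
  obtain ⟨q, hq⟩ := exists_stageApprox hp
  obtain ⟨q', hq'⟩ := exists_stageApprox hp'
  have hboth : PrimrecRel fun a s => q a s ∧ q' a s := hq.primrecRel.and hq'.primrecRel
  refine (rePred_exists_of_primrecRel hboth).of_eq fun a => ?_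
  exact ⟨fun ⟨_, hs, hs'⟩ => ⟨hq.sound hs, hq'.sound hs'⟩,
    fun ⟨ha, ha'⟩ => ((hq.eventually ha).and (hq'.eventually ha')).exists⟩

theorem rePred_or {p p' : α → Prop} (hp : REPred p) (hp' : REPred p') :
    REPred fun a => p a ∨ p' a := by
  obtain ⟨q, hq⟩ := exists_stageApprox hp
  obtain ⟨q', hq'⟩ := exists_stageApprox hp'
  have heither : PrimrecRel fun a s => q a s ∨ q' a s := hq.primrecRel.or hq'.primrecRel
  refine (rePred_exists_of_primrecRel heither).of_eq fun a => ?_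
  rw [hq.iff_exists, hq'.iff_exists, exists_or]

theorem rePred_exists {p : α → ℕ → Prop} (hp : REPred fun x : α × ℕ => p x.1 x.2) :
    REPred fun a => ∃ n, p a n := by
  obtain ⟨q, hq⟩ := exists_stageApprox hp
  have hunpair : Primrec fun x : α × ℕ => x.2.unpair := Primrec.unpair.comp Primrec.snd
  have hdovetail : PrimrecRel fun (a : α) (s : ℕ) => q (a, s.unpair.1) s.unpair.2 :=
    hq.primrecRel.comp (Primrec.fst.pair (Primrec.fst.comp hunpair)) (Primrec.snd.comp hunpair)
  refine (rePred_exists_of_primrecRel hdovetail).of_eq fun a => ⟨?_, ?_⟩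
  · rintro ⟨s, hs⟩
    exact ⟨_, hq.sound hs⟩
  · rintro ⟨n, hn⟩
    obtain ⟨s, hs⟩ := (hq.iff_exists (a, n)).1 hn
    exact ⟨Nat.pair n s, by simpa using hs⟩

theorem rePred_forall_lt {p : α → ℕ → Prop} (hp : REPred fun x : α × ℕ => p x.1 x.2) :
    REPred fun x : α × ℕ => ∀ u < x.2, p x.1 u := by
  obtain ⟨q, hq⟩ := exists_stageApprox hp
  have hbody : PrimrecRel fun (u : ℕ) (y : α × ℕ) => q (y.1, u) y.2 :=
    hq.primrecRel.comp ((Primrec.fst.comp Primrec.snd).pair Primrec.fst)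
      (Primrec.snd.comp Primrec.snd)
  have hforall : PrimrecRel fun (x : α × ℕ) (s : ℕ) => ∀ u ∈ List.range x.2, q (x.1, u) s :=
    hbody.forall_mem_list.comp (Primrec.list_range.comp (Primrec.snd.comp Primrec.fst))
      ((Primrec.fst.comp Primrec.fst).pair Primrec.snd)
  refine (rePred_exists_of_primrecRel hforall).of_eq fun x => ?_
  simp only [List.mem_range]
  exact ⟨fun ⟨s, hs⟩ u hu => hq.sound (hs u hu), fun hx =>
    ((eventually_all_finite (finite_lt_nat x.2)).2 fun u hu => hq.eventually (hx u hu)).exists⟩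

end RecursivelyEnumerable

section Indices

theorem ceSet_iff_rePred {X : Set ℕ} : CeSet X ↔ REPred (· ∈ X) := by
  constructor
  · rintro ⟨e, rfl⟩
    have hphi : Partrec (phi e) := Partrec.nat_iff.2 (Code.exists_code.2 ⟨_, rfl⟩)
    exact hphi.dom_re
  · intro hX
    obtain ⟨c, hc⟩ := Code.exists_code.1 hX
    refine ⟨Encodable.encode c, ?_⟩
    ext x
    simp [WSet, phi, hc, Part.dom_iff_mem]

theorem ceSet_of_primrecPred {p : ℕ → Prop} (hp : PrimrecPred p) : CeSet {x | p x} :=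
  ceSet_iff_rePred.2 hp.computablePred.to_re

theorem ceSet_of_finite {X : Set ℕ} (hX : X.Finite) : CeSet X := by
  induction X, hX using Set.Finite.induction_on with
  | empty => simpa using ceSet_of_primrecPred (Primrec.nat_lt.comp Primrec.id (Primrec.const 0))
  | @insert a s _ _ ih =>
    exact ceSet_iff_rePred.2 <| rePred_or
      (Primrec.eq.comp Primrec.id (Primrec.const a)).computablePred.to_re (ceSet_iff_rePred.1 ih)

/-- The sets `X 0, X 1, …` are c.e. uniformly in their index. -/
def UniformlyCE (X : ℕ → Set ℕ) : Prop := REPred fun p : ℕ × ℕ => p.2 ∈ X p.1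

theorem uniformlyCE_const {X : Set ℕ} (hX : CeSet X) : UniformlyCE fun _ => X :=
  rePred_comp (ceSet_iff_rePred.1 hX) Computable.snd

theorem UniformlyCE.comp {X : ℕ → Set ℕ} (hX : UniformlyCE X) {f : ℕ → ℕ} (hf : Computable f) :
    UniformlyCE fun n => X (f n) :=
  rePred_comp hX ((hf.comp Computable.fst).pair Computable.snd)

theorem UniformlyCE.rePred_mem {X : ℕ → Set ℕ} (hX : UniformlyCE X) (z : ℕ) :
    REPred fun n => z ∈ X n :=
  rePred_comp hX (Computable.id.pair (Computable.const z))

theorem uniformlyCE_compl_singleton : UniformlyCE fun x => {x}ᶜ :=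
  (Primrec.eq.comp Primrec.snd Primrec.fst).not.computablePred.to_re

theorem uniformlyCE_ran : UniformlyCE fun e => (phi e).ran := by
  have hgraph : PrimrecRel fun (p : (ℕ × ℕ) × ℕ) (k : ℕ) =>
      Code.evaln k (Denumerable.ofNat Code p.1.1) p.2 = some p.1.2 := by
    have heval : Primrec fun p : ((ℕ × ℕ) × ℕ) × ℕ =>
        Code.evaln p.2 (Denumerable.ofNat Code p.1.1.1) p.1.2 :=
      Code.primrec_evaln.comp <| (Primrec.snd.pair ((Primrec.ofNat Code).comp
        (Primrec.fst.comp (Primrec.fst.comp Primrec.fst)))).pair (Primrec.snd.comp Primrec.fst)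
    exact Primrec.eq.comp heval
      (Primrec.option_some.comp (Primrec.snd.comp (Primrec.fst.comp Primrec.fst)))
  refine (rePred_exists (p := fun p x => ∃ k, Code.evaln k (Denumerable.ofNat Code p.1) x =
    some p.2) (rePred_exists_of_primrecRel hgraph)).of_eq fun p => ?_
  exact exists_congr fun x => Code.evaln_complete.symm

theorem UniformlyCE.exists_index {X : ℕ → Set ℕ} (hX : UniformlyCE X) :
    ∃ g : ℕ → ℕ, Computable g ∧ ∀ n, (phi (g n)).ran = X n ∧ WSet (g n) = X n := by
  have hid : Partrec fun n : ℕ =>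
      (Part.assert (n.unpair.2 ∈ X n.unpair.1) fun _ => Part.some ()).map fun _ => n.unpair.2 :=
    (rePred_comp hX Primrec.unpair.to_comp).map
      (Computable.snd.comp (Primrec.unpair.to_comp.comp Computable.fst))
  obtain ⟨c, hc⟩ := Code.exists_code.1 (Partrec.nat_iff.1 hid)
  have hphi : ∀ n x y, y ∈ phi (Encodable.encode (c.curry n)) x ↔ x ∈ X n ∧ x = y := by
    simp [phi, Code.eval_curry, hc]
  refine ⟨fun n => Encodable.encode (c.curry n),
    (Primrec.encode.comp (Code.primrec₂_curry.comp (Primrec.const c) Primrec.id)).to_comp,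
    fun n => ⟨?_, ?_⟩⟩
  · ext y
    simp [PFun.ran, hphi]
  · ext x
    simp [WSet, PFun.mem_dom, hphi]

theorem CeSet.exists_ran_eq {X : Set ℕ} (hX : CeSet X) : ∃ e, (phi e).ran = X :=
  let ⟨g, _, hg⟩ := (uniformlyCE_const hX).exists_index
  ⟨g 0, (hg 0).1⟩

theorem UniformlyCE.exists_fixed_point {X : ℕ → Set ℕ} (hX : UniformlyCE X) :
    ∃ e, (phi e).ran = X e := by
  obtain ⟨g, hg, hran⟩ := hX.exists_index
  obtain ⟨c, hc⟩ := Code.fixed_point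
    ((Computable.ofNat Code).comp (hg.comp (Computable.encode (α := Code))))
  refine ⟨Encodable.encode c, ?_⟩
  rw [← (hran _).1]
  simp only [phi, Denumerable.ofNat_encode, hc]

end Indices

section RiceShapiro

variable {I : ℕ → Prop}

theorem rice_shapiro_monotone (hI : REPred I)
    (hext : ∀ e e', (phi e).ran = (phi e').ran → I e → I e') {e e' : ℕ}
    (hsub : (phi e).ran ⊆ (phi e').ran) (he : I e) : I e' := by
  have hX : UniformlyCE fun i => {x | x ∈ (phi e).ran ∨ I i ∧ x ∈ (phi e').ran} :=
    rePred_or (uniformlyCE_ran.comp (Computable.const e)) <|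
      rePred_and (rePred_comp hI Computable.fst) (uniformlyCE_ran.comp (Computable.const e'))
  obtain ⟨i, hi⟩ := hX.exists_fixed_point
  have hIi : I i := by
    by_contra hIi
    exact hIi (hext e i (by simp [hi, hIi]) he)
  have hunion : (phi i).ran = (phi e).ran ∪ (phi e').ran := by simp [hi, hIi, Set.union_def]
  exact hext i e' (hunion.trans (union_eq_self_of_subset_left hsub)) hIi

theorem rice_shapiro_compact (hI : REPred I)
    (hext : ∀ e e', (phi e).ran = (phi e').ran → I e → I e') {e : ℕ} (he : I e) :
    ∃ i n, (phi i).ran ⊆ (phi e).ran ∩ Iio n ∧ I i := by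
  obtain ⟨q, hq⟩ := exists_stageApprox hI
  obtain ⟨r, hr⟩ := exists_stageApprox uniformlyCE_ran
  -- `i` copies the enumeration of `e` until it sees itself enter the index set
  have hX : UniformlyCE fun i => {x | ∃ s, x < s ∧ r (e, x) s ∧ ¬ q i s} := by
    have hx : Primrec fun p : (ℕ × ℕ) × ℕ => p.1.2 := Primrec.snd.comp Primrec.fst
    exact rePred_exists_of_primrecRel <| (Primrec.nat_lt.comp hx Primrec.snd).and <|
      (hr.primrecRel.comp ((Primrec.const e).pair hx) Primrec.snd).and
        (hq.primrecRel.comp (Primrec.fst.comp Primrec.fst) Primrec.snd).not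
  obtain ⟨i, hi⟩ := hX.exists_fixed_point
  have hsub : (phi i).ran ⊆ (phi e).ran := by
    rw [hi]
    rintro x ⟨s, -, hs, -⟩
    exact hr.sound hs
  have hIi : I i := by
    by_contra hIi
    refine hIi (hext e i (Subset.antisymm (fun x hx => ?_) hsub) he)
    obtain ⟨s, hs, hxs⟩ := ((hr.eventually (a := (e, x)) hx).and (eventually_gt_atTop x)).exists
    exact hi ▸ ⟨s, hxs, hs, fun hqs => hIi (hq.sound hqs)⟩
  obtain ⟨n, hn⟩ := eventually_atTop.1 (hq.eventually hIi)
  refine ⟨i, n, fun x hx => ⟨hsub hx, ?_⟩, hIi⟩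
  rw [hi] at hx
  obtain ⟨s, hxs, -, hqs⟩ := hx
  exact hxs.trans (not_le.1 fun hns => hqs (hn s hns))

end RiceShapiro

section Saturation

/-- The `E`-saturation of `X`: all elements `E`-related to an element of `X`. -/
def saturation (E : ℕ → ℕ → Prop) (X : Set ℕ) : Set ℕ := {z | ∃ w ∈ X, E w z}

variable {E F : ℕ → ℕ → Prop}

theorem subset_saturation (hE : Equivalence E) (X : Set ℕ) : X ⊆ saturation E X :=
  fun x hx => ⟨x, hx, hE.refl x⟩

theorem saturation_saturation_of_le (hE : Equivalence E) (hF : Equivalence F)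
    (hFE : ∀ m n, F m n → E m n) (X : Set ℕ) :
    saturation F (saturation E X) = saturation E X := by
  refine Subset.antisymm ?_ (subset_saturation hF _)
  rintro z ⟨y, ⟨x, hx, hxy⟩, hyz⟩
  exact ⟨x, hx, hE.trans hxy (hFE y z hyz)⟩

theorem fsJump_iff_saturation_eq (hE : Equivalence E) {e e' : ℕ} :
    FSJump E e e' ↔ saturation E (phi e).ran = saturation E (phi e').ran := by
  have hsUnion : ∀ X : Set ℕ, saturation E X = ⋃₀ (classOf E '' X) := fun X => by
    ext z
    simp [saturation, classOf]
  have hclasses : ∀ X Y : Set ℕ, saturation E X = saturation E Y →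
      classOf E '' X ⊆ classOf E '' Y := by
    rintro X Y h _ ⟨x, hx, rfl⟩
    obtain ⟨y, hy, hyx⟩ : x ∈ saturation E Y := h ▸ subset_saturation hE X hx
    exact ⟨y, hy, ext fun z => ⟨hE.trans (hE.symm hyx), hE.trans hyx⟩⟩
  refine ⟨fun h => ?_, fun h => (hclasses _ _ h).antisymm (hclasses _ _ h.symm)⟩
  rw [hsUnion, hsUnion]
  exact congrArg sUnion h

theorem UniformlyCE.saturation (hE : REPred fun p : ℕ × ℕ => E p.1 p.2) {X : ℕ → Set ℕ}
    (hX : UniformlyCE X) : UniformlyCE fun n => saturation E (X n) := by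
  have hmem : REPred fun x : (ℕ × ℕ) × ℕ => x.2 ∈ X x.1.1 :=
    rePred_comp hX ((Computable.fst.comp Computable.fst).pair Computable.snd)
  have hrel : REPred fun x : (ℕ × ℕ) × ℕ => E x.2 x.1.2 :=
    rePred_comp hE (Computable.snd.pair (Computable.snd.comp Computable.fst))
  exact rePred_exists (rePred_and hmem hrel)

end Saturation

section Reductions

variable {E F G : ℕ → ℕ → Prop}

theorem Reduces.trans : Reduces E F → Reduces F G → Reduces E G
  | ⟨f, hf, hEF⟩, ⟨g, hg, hFG⟩ => ⟨g ∘ f, hg.comp hf, fun m n => (hEF m n).trans (hFG _ _)⟩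

theorem fsJump_reduces_fsJump_of_le (hE : Equivalence E) (hF : Equivalence F)
    (hre : REPred fun p : ℕ × ℕ => E p.1 p.2) (hFE : ∀ m n, F m n → E m n) :
    Reduces (FSJump E) (FSJump F) := by
  obtain ⟨g, hg, hindex⟩ := (uniformlyCE_ran.saturation hre).exists_index
  refine ⟨g, hg, fun m n => ?_⟩
  simp only [fsJump_iff_saturation_eq hE, fsJump_iff_saturation_eq hF, (hindex _).1,
    saturation_saturation_of_le hE hF hFE]

theorem fsJump_reduces_eqCE (hE : Equivalence E) (hre : REPred fun p : ℕ × ℕ => E p.1 p.2) :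
    Reduces (FSJump E) eqCE := by
  obtain ⟨g, hg, hindex⟩ := (uniformlyCE_ran.saturation hre).exists_index
  refine ⟨g, hg, fun m n => ?_⟩
  simp only [fsJump_iff_saturation_eq hE, eqCE, (hindex _).2]

end Reductions

section JumpOperators

/-- The set operator induced by a family `V` of sets indexed by programs: collect `V e` over all `e`
whose range is contained in the argument. Unlike `V` it makes sense on sets that are not c.e. -/
def inducedOperator (V : ℕ → Set ℕ) (X : Set ℕ) : Set ℕ := {z | ∃ e, (phi e).ran ⊆ X ∧ z ∈ V e}

theorem inducedOperator_ran {V : ℕ → Set ℕ} (hV : UniformlyCE V)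
    (hext : ∀ e e', (phi e).ran = (phi e').ran → V e = V e') (e : ℕ) :
    inducedOperator V (phi e).ran = V e := by
  refine Subset.antisymm ?_ fun z hz => ⟨e, Subset.rfl, hz⟩
  rintro z ⟨i, hi, hz⟩
  exact rice_shapiro_monotone (hV.rePred_mem z) (fun e e' h hz => hext e e' h ▸ hz) hi hz

/-- `Γ` is an enumeration operator that descends to an injection from the c.e. sets modulo
`E`-saturation to the `F`-saturated c.e. sets. This is what a reduction of `E⁺` to `F⁺` amounts
to once indices are forgotten. -/
structure JumpOperator (E F : ℕ → ℕ → Prop) (Γ : Set ℕ → Set ℕ) : Prop where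
  monotone : Monotone Γ
  compact : ∀ {X z}, z ∈ Γ X → ∃ n, z ∈ Γ (X ∩ Iio n)
  uniformlyCE : ∀ {X : ℕ → Set ℕ}, UniformlyCE X → UniformlyCE fun n => Γ (X n)
  saturated : ∀ {X z z'}, F z z' → z ∈ Γ X → z' ∈ Γ X
  injective : ∀ {X Y}, CeSet X → CeSet Y → Γ X = Γ Y → saturation E X = saturation E Y

theorem exists_jumpOperator {E F : ℕ → ℕ → Prop} (hE : Equivalence E) (hF : Equivalence F)
    (hre : REPred fun p : ℕ × ℕ => F p.1 p.2) (hred : Reduces (FSJump E) (FSJump F)) :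
    ∃ Γ, JumpOperator E F Γ := by
  obtain ⟨f, hf, hfred⟩ := hred
  simp only [fsJump_iff_saturation_eq hE, fsJump_iff_saturation_eq hF] at hfred
  let V : ℕ → Set ℕ := fun e => saturation F (phi (f e)).ran
  have hV : UniformlyCE V := (uniformlyCE_ran.comp hf).saturation hre
  have hext : ∀ e e', (phi e).ran = (phi e').ran → V e = V e' :=
    fun e e' h => (hfred e e').1 (congrArg _ h)
  have hΓ : ∀ e, inducedOperator V (phi e).ran = V e := inducedOperator_ran hV hext
  refine ⟨inducedOperator V, ?_, ?_, ?_, ?_, ?_⟩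
  · rintro X Y hXY z ⟨e, he, hz⟩
    exact ⟨e, he.trans hXY, hz⟩
  · rintro X z ⟨e, he, hz⟩
    obtain ⟨i, n, hi, hiz⟩ := rice_shapiro_compact (hV.rePred_mem z)
      (fun e e' h hz => hext e e' h ▸ hz) hz
    exact ⟨n, i, hi.trans (inter_subset_inter_left _ he), hiz⟩
  · intro X hX
    obtain ⟨g, hg, hindex⟩ := hX.exists_index
    simpa only [← hΓ, (hindex _).1] using hV.comp hg
  · rintro X z z' hzz' ⟨e, he, w, hw, hwz⟩
    exact ⟨e, he, w, hw, hF.trans hwz hzz'⟩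
  · intro X Y hX hY hXY
    obtain ⟨e, rfl⟩ := hX.exists_ran_eq
    obtain ⟨e', rfl⟩ := hY.exists_ran_eq
    exact (hfred e e').2 (by simpa only [hΓ] using hXY)

theorem JumpOperator.uniformlyCE_compl_singleton {E F : ℕ → ℕ → Prop} {Γ : Set ℕ → Set ℕ}
    (hΓ : JumpOperator E F Γ) : UniformlyCE fun x => Γ {x}ᶜ :=
  hΓ.uniformlyCE _root_.uniformlyCE_compl_singleton

theorem JumpOperator.eventually_mem_compl_singleton {E F : ℕ → ℕ → Prop} {Γ : Set ℕ → Set ℕ}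
    (hΓ : JumpOperator E F Γ) {z : ℕ} (hz : z ∈ Γ univ) : ∀ᶠ x in atTop, z ∈ Γ {x}ᶜ := by
  obtain ⟨n, hn⟩ := hΓ.compact hz
  filter_upwards [eventually_ge_atTop n] with x hx
  refine hΓ.monotone ?_ hn
  rintro t ⟨-, ht⟩ rfl
  exact absurd ht (not_lt.2 hx)

end JumpOperators

section OneClass

variable {A B X : Set ℕ}

theorem equivalence_EA (A : Set ℕ) : Equivalence (EA A) where
  refl _ := Or.inl rfl
  symm := by
    rintro x y (rfl | ⟨hx, hy⟩)
    exacts [Or.inl rfl, Or.inr ⟨hy, hx⟩]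
  trans := by
    rintro x y z (rfl | ⟨hx, hy⟩) (rfl | ⟨hy', hz⟩)
    exacts [Or.inl rfl, Or.inr ⟨hy', hz⟩, Or.inr ⟨hx, hy⟩, Or.inr ⟨hx, hz⟩]

theorem EA_mono (hBA : B ⊆ A) (m n : ℕ) : EA B m n → EA A m n :=
  Or.imp_right (And.imp (@hBA m) (@hBA n))

theorem CeSet.rePred_EA (hA : CeSet A) : REPred fun p : ℕ × ℕ => EA A p.1 p.2 :=
  rePred_or (Primrec.eq.comp Primrec.fst Primrec.snd).computablePred.to_re <|
    rePred_and (rePred_comp (ceSet_iff_rePred.1 hA) Computable.fst)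
      (rePred_comp (ceSet_iff_rePred.1 hA) Computable.snd)

theorem mem_saturation_EA_of_notMem {x : ℕ} (hx : x ∉ A) : x ∈ saturation (EA A) X ↔ x ∈ X := by
  refine ⟨?_, fun h => subset_saturation (equivalence_EA A) X h⟩
  rintro ⟨w, hw, rfl | ⟨-, hxA⟩⟩
  exacts [hw, absurd hxA hx]

end OneClass

section Greedy

open Classical in
/-- A greedy enumeration, as the list of elements accepted before stage `s`. The candidate at stage
`s` is `s.unpair.1`, so that every number is a candidate infinitely often; it is accepted if
`C w s` holds for all `w` accepted earlier. -/
noncomputable def greedy (C : ℕ → ℕ → Prop) : ℕ → List ℕ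
  | 0 => []
  | s + 1 => if ∀ w ∈ greedy C s, C w s then s.unpair.1 :: greedy C s else greedy C s

variable {C : ℕ → ℕ → Prop}

theorem unpair_mem_greedy_succ {s : ℕ} (hs : ∀ w ∈ greedy C s, C w s) :
    s.unpair.1 ∈ greedy C (s + 1) := by
  simp only [greedy, if_pos hs, List.mem_cons_self]

theorem greedy_subset_greedy {s t : ℕ} (hst : s ≤ t) : greedy C s ⊆ greedy C t := by
  induction t, hst using Nat.le_induction with
  | base => exact List.Subset.refl _
  | succ t _ ih =>
    rw [greedy]
    split_ifs
    exacts [List.subset_cons_of_subset _ ih, ih]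

theorem exists_stage_of_mem_greedy {s t z : ℕ} (hs : z ∉ greedy C s) (ht : z ∈ greedy C t) :
    ∃ r, s ≤ r ∧ r.unpair.1 = z ∧ ∀ w ∈ greedy C r, C w r := by
  induction t with
  | zero => simp [greedy] at ht
  | succ t ih =>
    by_cases hzt : z ∈ greedy C t
    · exact ih hzt
    have hst : s ≤ t := Nat.lt_succ_iff.1 <| not_le.1 fun hts => hs (greedy_subset_greedy hts ht)
    rw [greedy] at ht
    split_ifs at ht with haccept
    · exact ⟨t, hst, ((List.mem_cons.1 ht).resolve_right hzt).symm, haccept⟩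
    · exact absurd ht hzt

theorem primrec_greedy (hC : PrimrecRel C) : Primrec (greedy C) := by
  classical
  refine (Primrec.nat_rec₁ (f := fun s l => if ∀ w ∈ l, C w s then s.unpair.1 :: l else l) []
    (Primrec.ite (hC.forall_mem_list.comp Primrec.snd Primrec.fst)
      (Primrec.list_cons.comp (Primrec.fst.comp (Primrec.unpair.comp Primrec.fst)) Primrec.snd)
      Primrec.snd)).of_eq fun n => ?_
  induction n with
  | zero => rfl
  | succ n ih => simp only [greedy, ih]

theorem ceSet_greedy (hC : PrimrecRel C) : CeSet {z | ∃ s, z ∈ greedy C s} := by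
  have hmem : PrimrecRel fun z s => ∃ w ∈ greedy C s, w = z :=
    (PrimrecRel.exists_mem_list Primrec.eq).comp ((primrec_greedy hC).comp Primrec.snd) Primrec.fst
  refine ceSet_iff_rePred.2 ((rePred_exists_of_primrecRel hmem).of_eq fun z => ?_)
  simp only [exists_eq_right, mem_ofPred_eq]

theorem exists_greedy_set {R : ℕ → ℕ → Prop} (hR : REPred fun p : ℕ × ℕ => R p.1 p.2) :
    ∃ W, CeSet W ∧ (∀ z, (∀ w ∈ W, w < z → R w z) → z ∈ W) ∧
      ∀ w ∈ W, ∃ D : Finset ℕ, w ∈ D ∧ ∀ u ∈ D, ∀ z ∈ W, z ∉ D → u < z → R u z := by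
  obtain ⟨q, hq⟩ := exists_stageApprox hR
  let C : ℕ → ℕ → Prop := fun w s => s.unpair.1 ≤ w ∨ q (w, s.unpair.1) s
  have hC : PrimrecRel C := by
    have hcand : Primrec fun p : ℕ × ℕ => p.2.unpair.1 :=
      Primrec.fst.comp (Primrec.unpair.comp Primrec.snd)
    exact (Primrec.nat_le.comp hcand Primrec.fst).or
      (hq.primrecRel.comp (Primrec.fst.pair hcand) Primrec.snd)
  refine ⟨{z | ∃ s, z ∈ greedy C s}, ceSet_greedy hC, fun z hz => ?_, ?_⟩
  · have hconfirmed : ∀ᶠ s in atTop, ∀ w < z, (∃ t, w ∈ greedy C t) → q (w, z) s :=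
      (eventually_all_finite (finite_lt_nat z)).2 fun w hw => by
        by_cases hwW : ∃ t, w ∈ greedy C t
        · filter_upwards [hq.eventually (a := (w, z)) (hz w hwW hw)] with s hs _ using hs
        · exact .of_forall fun s h => absurd h hwW
    have hpair : Tendsto (Nat.pair z) atTop atTop :=
      StrictMono.tendsto_atTop fun _ _ h => Nat.pair_lt_pair_right z h
    obtain ⟨k, hk⟩ := (hpair.eventually hconfirmed).exists
    have haccept : ∀ w ∈ greedy C (Nat.pair z k), C w (Nat.pair z k) := fun w hw => by
      simp only [C, Nat.unpair_pair]
      exact (le_or_gt z w).imp_right fun hwz => hk w hwz ⟨_, hw⟩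
    exact ⟨_, by simpa only [Nat.unpair_pair] using unpair_mem_greedy_succ haccept⟩
  · rintro w ⟨s, hs⟩
    refine ⟨(greedy C s).toFinset, List.mem_toFinset.2 hs, fun u hu z ⟨t, ht⟩ hz huz => ?_⟩
    obtain ⟨r, hsr, rfl, haccept⟩ := exists_stage_of_mem_greedy (mt List.mem_toFinset.2 hz) ht
    have hCur : C u r := haccept u (greedy_subset_greedy hsr (List.mem_toFinset.1 hu))
    exact hq.sound (hCur.resolve_left (not_le.2 huz))

end Greedy

section Maximal

/-- The filter of sets containing all but finitely many elements of the complement of `A`. For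
maximal `A` it is an ultrafilter as far as c.e. sets can tell. -/
def complFilter (A : Set ℕ) : Filter ℕ := atTop ⊓ 𝓟 Aᶜ

variable {A : Set ℕ} {p : ℕ → Prop}

theorem eventually_complFilter_iff_finite :
    (∀ᶠ x in complFilter A, p x) ↔ ({x | p x}ᶜ \ A).Finite := by
  rw [complFilter, eventually_inf_principal, ← Nat.cofinite_eq_atTop, eventually_cofinite]
  congr! 1
  ext x
  simp [and_comm]

theorem eventually_complFilter_iff_exists_forall_ge :
    (∀ᶠ x in complFilter A, p x) ↔ ∃ m, ∀ x ≥ m, x ∉ A → p x := by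
  rw [complFilter, eventually_inf_principal, eventually_atTop]
  rfl

theorem eventually_notMem_complFilter : ∀ᶠ x in complFilter A, x ∉ A :=
  eventually_inf_principal.2 (.of_forall fun _ hx => hx)

theorem finite_sdiff_of_eventually_notMem {W : Set ℕ} (hW : ∀ᶠ x in complFilter A, x ∉ W) :
    (W \ A).Finite := by
  simpa [compl_def] using eventually_complFilter_iff_finite.1 hW

theorem complFilter_le_atTop : complFilter A ≤ atTop := inf_le_left

theorem MaximalSet.complFilter_neBot (hA : MaximalSet A) : (complFilter A).NeBot := by
  rw [← frequently_true_iff_neBot, Filter.Frequently, eventually_complFilter_iff_finite]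
  simpa [← compl_eq_univ_sdiff] using hA.2.1

theorem MaximalSet.eventually_of_frequently (hA : MaximalSet A) (hp : REPred p)
    (hfreq : ∃ᶠ x in complFilter A, p x) : ∀ᶠ x in complFilter A, p x := by
  rw [Filter.Frequently, eventually_complFilter_iff_finite] at hfreq
  refine eventually_complFilter_iff_finite.2 <|
    (hA.2.2 {x | p x} (ceSet_iff_rePred.2 hp)).resolve_left ?_
  simpa [compl_def] using hfreq

theorem MaximalSet.infinite (hA : MaximalSet A) : A.Infinite := by
  intro hfin
  have hcompl : complFilter A = atTop :=
    inf_eq_left.2 (le_principal_iff.2 (by simpa [← Nat.cofinite_eq_atTop] using hfin))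
  have heven : REPred (Even : ℕ → Prop) :=
    (Primrec.eq.comp (Primrec.nat_mod.comp Primrec.id (Primrec.const 2))
      (Primrec.const 0)).computablePred.to_re.of_eq fun _ => Nat.even_iff.symm
  have hev := hA.eventually_of_frequently heven (hcompl ▸ Nat.frequently_even)
  rw [hcompl] at hev
  exact Nat.frequently_odd (hev.mono fun n hn => Nat.not_odd_iff_even.2 hn)

theorem exists_isGreatest_inter_Iio {S : Set ℕ} (hS : S.Infinite) {w : ℕ} (hw : w ∈ S) :
    ∃ z ∈ S, IsGreatest (S ∩ Iio z) w := by
  obtain ⟨⟨hzS, hwz⟩, hleast⟩ : IsLeast (S ∩ Ioi w) (sInf (S ∩ Ioi w)) :=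
    isLeast_csInf (hS.exists_gt w)
  refine ⟨_, hzS, ⟨hw, hwz⟩, fun u ⟨huS, huz⟩ => not_lt.1 fun hwu => ?_⟩
  exact (hleast ⟨huS, hwu⟩).not_gt huz

theorem MaximalSet.frequently_exists_isGreatest (hA : MaximalSet A) {R : ℕ → ℕ → Prop}
    (hR : REPred fun p : ℕ × ℕ => R p.1 p.2) (hev : ∀ w ∉ A, ∀ᶠ z in complFilter A, R w z) :
    ∃ᶠ z in complFilter A, ∃ w, IsGreatest (Aᶜ ∩ Iio z) w ∧ R w z := by
  -- The greedy set that accepts `z` only if `R w z` for all accepted `w ∉ A`, `w < z`, contains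
  -- almost all of `Aᶜ`. The largest element of `Aᶜ` accepted by a late stage is then followed
  -- in `Aᶜ` by an element accepted after it.
  have := hA.complFilter_neBot
  obtain ⟨W, hW, hlive, hfinite⟩ := exists_greedy_set (R := fun w z => w ∈ A ∨ R w z)
    (rePred_or (rePred_comp (ceSet_iff_rePred.1 hA.1) Computable.fst) hR)
  have hWev : ∀ᶠ z in complFilter A, z ∈ W := by
    refine hA.eventually_of_frequently (ceSet_iff_rePred.1 hW) fun hWfin => ?_
    obtain ⟨z, hz, hzW⟩ := (((eventually_all_finite (finite_sdiff_of_eventually_notMem hWfin)).2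
      fun w hw => hev w hw.2).and hWfin).exists
    exact hzW (hlive z fun w hw _ => or_iff_not_imp_left.2 fun hwA => hz w ⟨hw, hwA⟩)
  intro hnone
  obtain ⟨m, hm⟩ := eventually_complFilter_iff_exists_forall_ge.1 (hWev.and hnone)
  obtain ⟨w₀, hw₀A, hmw₀⟩ := hA.2.1.exists_gt m
  obtain ⟨D, hw₀D, hD⟩ := hfinite w₀ (hm w₀ hmw₀.le hw₀A).1
  obtain ⟨w, ⟨hwD, hwA⟩, hmax⟩ : ∃ w, IsGreatest (↑D \ A) w :=
    D.finite_toSet.sdiff.isCompact.exists_isGreatest ⟨w₀, hw₀D, hw₀A⟩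
  obtain ⟨z, hzA, hwz⟩ := exists_isGreatest_inter_Iio hA.2.1 hwA
  have hmz : m ≤ z := hmw₀.le.trans ((hmax ⟨hw₀D, hw₀A⟩).trans hwz.1.2.le)
  have hzD : z ∉ D := fun hz => (hmax ⟨hz, hzA⟩).not_gt hwz.1.2
  obtain ⟨hzW, hz⟩ := hm z hmz hzA
  exact hz ⟨w, hwz, (hD w hwD z hzW hzD hwz.1.2).resolve_left hwA⟩

theorem MaximalSet.eventually_forall_gt (hA : MaximalSet A) {R : ℕ → ℕ → Prop}
    (hR : REPred fun p : ℕ × ℕ => R p.1 p.2)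
    (hev : ∀ᶠ y in complFilter A, ∀ᶠ z in complFilter A, R y z) :
    ∀ᶠ y in complFilter A, ∀ z > y, z ∉ A → R y z := by
  obtain ⟨m, hm⟩ := eventually_complFilter_iff_exists_forall_ge.1 hev
  let Q : ℕ → ℕ → Prop := fun u z => u ∈ A ∨ u < m ∨ R u z
  have hQev : ∀ u, ∀ᶠ z in complFilter A, Q u z := fun u => by
    by_cases hu : u ∈ A
    · exact .of_forall fun _ => .inl hu
    rcases lt_or_ge u m with hum | hum
    · exact .of_forall fun _ => .inr (.inl hum)
    · exact (hm u hum hu).mono fun _ hz => .inr (.inr hz)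
  have hQ : REPred fun x : ℕ × ℕ => Q x.2 x.1 :=
    rePred_or (rePred_comp (ceSet_iff_rePred.1 hA.1) Computable.snd) <|
      rePred_or (Primrec.nat_lt.comp Primrec.snd (Primrec.const m)).computablePred.to_re
        (rePred_comp hR (Computable.snd.pair Computable.fst))
  have hQlt : REPred fun x : ℕ × ℕ => ∀ u < x.2, Q u x.1 :=
    rePred_forall_lt (p := fun z u => Q u z) hQ
  have hfreq : ∃ᶠ z in complFilter A, ∀ u < z, Q u z := by
    refine (hA.frequently_exists_isGreatest (R := fun w z => ∀ u < w + 1, Q u z)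
      (rePred_comp hQlt (Computable.snd.pair (Computable.succ.comp Computable.fst)))
      fun w _ => (eventually_all_finite (finite_lt_nat _)).2 fun u _ => hQev u).mono ?_
    rintro z ⟨w, hw, hwz⟩ u huz
    by_cases hu : u ∈ A
    · exact .inl hu
    · exact hwz u (Nat.lt_succ_of_le (hw.2 ⟨hu, huz⟩))
  obtain ⟨m', hm'⟩ := eventually_complFilter_iff_exists_forall_ge.1 <|
    hA.eventually_of_frequently (rePred_comp hQlt (Computable.id.pair Computable.id)) hfreq
  refine eventually_complFilter_iff_exists_forall_ge.2 ⟨max m m', fun y hy hyA z hyz hzA => ?_⟩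
  have hyQ := hm' z (((le_max_right m m').trans hy).trans hyz.le) hzA y hyz
  exact (hyQ.resolve_left hyA).resolve_left (not_lt.2 ((le_max_left m m').trans hy))

end Maximal

section JumpOfMaximal

variable {A B S X Y U : Set ℕ} {E : ℕ → ℕ → Prop} {Γ : Set ℕ → Set ℕ} {p : ℕ}

theorem injOn_saturation_EA_powerset (hS : (S ∩ B).Subsingleton) :
    InjOn (saturation (EA B)) (𝒫 S) := by
  have hle : ∀ X ∈ 𝒫 S, ∀ Y ∈ 𝒫 S, saturation (EA B) X = saturation (EA B) Y → X ⊆ Y := by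
    intro X hX Y hY h x hx
    obtain ⟨w, hw, rfl | ⟨hwB, hxB⟩⟩ : x ∈ saturation (EA B) Y :=
      h ▸ subset_saturation (equivalence_EA B) X hx
    · exact hw
    · exact hS ⟨hY hw, hwB⟩ ⟨hX hx, hxB⟩ ▸ hw
  exact fun X hX Y hY h => (hle X hX Y hY h).antisymm (hle Y hY X hX h.symm)

theorem JumpOperator.subset_of_forall_mem (hΓ : JumpOperator E (EA A) Γ) (hp : p ∈ A)
    (h : ∀ z ∈ insert p Aᶜ, z ∈ Γ X → z ∈ Γ Y) : Γ X ⊆ Γ Y := by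
  intro z hz
  by_cases hzA : z ∈ A
  · exact hΓ.saturated (.inr ⟨hp, hzA⟩) <|
      h p (mem_insert p _) (hΓ.saturated (.inr ⟨hzA, hp⟩) hz)
  · exact h z (mem_insert_of_mem p hzA) hz

theorem JumpOperator.finite_and_ncard_le_two_pow (hΓ : JumpOperator E (EA A) Γ) (hp : p ∈ A)
    (hU : (U \ A).Finite) {𝒳 : Set (Set ℕ)} (hce : ∀ X ∈ 𝒳, CeSet X)
    (hinj : InjOn (saturation E) 𝒳)
    (hsub : ∀ X ∈ 𝒳, Γ X ⊆ U) : 𝒳.Finite ∧ 𝒳.ncard ≤ 2 ^ ((U \ A).ncard + 1) := by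
  let trace : Set ℕ → Set ℕ := fun X => Γ X ∩ insert p (U \ A)
  have hmaps : MapsTo trace 𝒳 (𝒫 (insert p (U \ A))) := fun _ _ => inter_subset_right
  have hle : ∀ X ∈ 𝒳, ∀ Y, trace X = trace Y → Γ X ⊆ Γ Y := fun X hX Y h =>
    hΓ.subset_of_forall_mem hp fun z hz hzX =>
      inter_subset_left (h ▸ ⟨hzX, hz.imp_right fun hzA => ⟨hsub X hX hzX, hzA⟩⟩ : z ∈ trace Y)
  have htrace : InjOn trace 𝒳 := fun X hX Y hY h =>
    hinj hX hY <| hΓ.injective (hce X hX) (hce Y hY) ((hle X hX Y h).antisymm (hle Y hY X h.symm))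
  have hfin : (𝒫 (insert p (U \ A))).Finite := (hU.insert p).powerset
  refine ⟨.of_injOn hmaps htrace hfin, ?_⟩
  calc 𝒳.ncard ≤ (𝒫 (insert p (U \ A))).ncard := ncard_le_ncard_of_injOn trace hmaps htrace hfin
    _ = 2 ^ (insert p (U \ A)).ncard := ncard_powerset _ (hU.insert p)
    _ ≤ 2 ^ ((U \ A).ncard + 1) := Nat.pow_le_pow_right two_pos (ncard_insert_le p _)

theorem JumpOperator.eventually_complFilter_mem_compl_singleton
    (hΓ : JumpOperator (EA B) (EA A) Γ) (hA : MaximalSet A) (hBA : B ⊆ A) (y : ℕ) :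
    ∀ᶠ z in complFilter A, z ∈ Γ {y}ᶜ := by
  have hce : REPred fun z => z ∈ Γ {y}ᶜ :=
    rePred_comp hΓ.uniformlyCE_compl_singleton ((Computable.const y).pair Computable.id)
  refine hA.eventually_of_frequently hce fun hnot => ?_
  have hfin : (Γ {y}ᶜ \ A).Finite := finite_sdiff_of_eventually_notMem hnot
  obtain ⟨p, hp⟩ := hA.infinite.nonempty
  have hinj : InjOn (saturation (EA B)) (singleton '' (Aᶜ \ {y})) := by
    refine (injOn_saturation_EA_powerset (S := Aᶜ) ?_).mono ?_
    · exact fun x hx => absurd (hBA hx.2) hx.1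
    · rintro _ ⟨x, hx, rfl⟩
      exact singleton_subset_iff.2 hx.1
  have hinf : (singleton '' (Aᶜ \ {y}) : Set (Set ℕ)).Infinite :=
    (hA.2.1.sdiff (finite_singleton y)).image singleton_injective.injOn
  refine hinf (hΓ.finite_and_ncard_le_two_pow hp hfin ?_ hinj ?_).1
  · rintro _ ⟨x, -, rfl⟩
    exact ceSet_of_finite (finite_singleton x)
  · rintro _ ⟨x, hx, rfl⟩
    exact hΓ.monotone (singleton_subset_iff.2 hx.2)

theorem JumpOperator.ncard_le_ncard_sdiff_add_one (hΓ : JumpOperator (EA B) (EA A) Γ) (hp : p ∈ A)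
    (hU : (U \ A).Finite) (hS : S.Finite) (hSB : (S ∩ B).Subsingleton)
    (hsub : ∀ Y ⊆ S, Γ Y ⊆ U) : S.ncard ≤ (U \ A).ncard + 1 := by
  have hcard : (𝒫 S).ncard ≤ 2 ^ ((U \ A).ncard + 1) :=
    (hΓ.finite_and_ncard_le_two_pow hp hU (fun Y hY => ceSet_of_finite (hS.subset hY))
      (injOn_saturation_EA_powerset hSB) hsub).2
  rwa [ncard_powerset S hS, Nat.pow_le_pow_iff_right one_lt_two] at hcard

theorem JumpOperator.eventually_self_mem_compl_singleton (hΓ : JumpOperator (EA B) (EA A) Γ)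
    (hA : MaximalSet A) (hBA : B ⊂ A) : ∀ᶠ x in complFilter A, x ∈ Γ {x}ᶜ := by
  -- Otherwise `x ∉ Γ {x}ᶜ` for all `x ∉ A` above some `m`. Adding to the `k` elements of `Aᶜ` below
  -- `m` one element of `A \ B` and another of `A` gives `2 ^ (k + 2)` inequivalent sets, whose
  -- images under `Γ` can only be told apart at `k + 1` places.
  refine hA.eventually_of_frequently (rePred_comp hΓ.uniformlyCE_compl_singleton
    (Computable.id.pair Computable.id)) fun hnot => ?_
  obtain ⟨m, hm⟩ := eventually_complFilter_iff_exists_forall_ge.1 hnot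
  obtain ⟨p, hp, hpB⟩ := exists_of_ssubset hBA
  obtain ⟨q, hq, hpq⟩ := hA.infinite.exists_gt p
  let K : Set ℕ := Aᶜ ∩ Iio m
  have hK : K.Finite := (finite_Iio m).inter_of_right Aᶜ
  have hpK : p ∉ K := fun h => h.1 hp
  have hqK : q ∉ insert p K := by
    rintro (rfl | h)
    exacts [hpq.false, h.1 hq]
  let S : Set ℕ := insert q (insert p K)
  have hS : S.Finite := (hK.insert p).insert q
  have hSB : (S ∩ B).Subsingleton := by
    refine subsingleton_singleton.anti (t := {q}) ?_
    rintro x ⟨rfl | rfl | hx, hxB⟩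
    exacts [rfl, absurd hxB hpB, absurd (hBA.1 hxB) hx.1]
  have hdiff : (A ∪ K) \ A = K := by
    rw [union_sdiff_left, sdiff_eq_left.2]
    exact disjoint_left.2 fun x hx => hx.1
  have hsub : ∀ Y ⊆ S, Γ Y ⊆ A ∪ K := by
    refine fun Y hY z hz => or_iff_not_imp_left.2 fun hzA =>
      ⟨hzA, mem_Iio.2 (not_le.1 fun hmz => ?_)⟩
    refine hm z hmz hzA (hΓ.monotone (fun y hy => ?_) hz)
    rintro rfl
    rcases hY hy with rfl | rfl | hyK
    exacts [hzA hq, hzA hp, hyK.2.not_ge hmz]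
  have hcard : S.ncard ≤ K.ncard + 1 := by
    simpa only [hdiff] using hΓ.ncard_le_ncard_sdiff_add_one hp (by rwa [hdiff]) hS hSB hsub
  rw [ncard_insert_of_notMem hqK (hK.insert p), ncard_insert_of_notMem hpK hK] at hcard
  lia

theorem JumpOperator.exists_forall_ge_mem_compl_singleton (hΓ : JumpOperator (EA B) (EA A) Γ)
    (hA : MaximalSet A) (hBA : B ⊂ A) :
    ∃ m, ∀ x ≥ m, x ∉ A → ∀ z ≥ m, z ∉ A → z ∈ Γ {x}ᶜ := by
  have hself := hΓ.eventually_self_mem_compl_singleton hA hBA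
  have hre : REPred fun p : ℕ × ℕ => p.2 ∈ Γ {p.1}ᶜ ∧ p.1 ∈ Γ {p.2}ᶜ :=
    rePred_and hΓ.uniformlyCE_compl_singleton
      (rePred_comp hΓ.uniformlyCE_compl_singleton (Computable.snd.pair Computable.fst))
  have hpairs : ∀ᶠ y in complFilter A, ∀ᶠ z in complFilter A, z ∈ Γ {y}ᶜ ∧ y ∈ Γ {z}ᶜ := by
    filter_upwards [hself] with y hy
    exact (hΓ.eventually_complFilter_mem_compl_singleton hA hBA.1 y).and <| complFilter_le_atTop <|
      hΓ.eventually_mem_compl_singleton (hΓ.monotone (subset_univ _) hy)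
  obtain ⟨m, hm⟩ := eventually_complFilter_iff_exists_forall_ge.1 <|
    hself.and (hA.eventually_forall_gt (R := fun y z => z ∈ Γ {y}ᶜ ∧ y ∈ Γ {z}ᶜ) hre hpairs)
  refine ⟨m, fun x hx hxA z hz hzA => ?_⟩
  rcases lt_trichotomy x z with hxz | rfl | hzx
  · exact ((hm x hx hxA).2 z hxz hzA).1
  · exact (hm x hx hxA).1
  · exact ((hm z hz hzA).2 x hzx hxA).2

theorem MaximalSet.not_jumpOperator (hA : MaximalSet A) (hBA : B ⊂ A) :
    ¬ JumpOperator (EA B) (EA A) Γ := by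
  intro hΓ
  have := hA.complFilter_neBot
  obtain ⟨m, hm⟩ := hΓ.exists_forall_ge_mem_compl_singleton hA hBA
  obtain ⟨p, hp⟩ := hA.infinite.nonempty
  have hsmall : ∀ᶠ x in complFilter A, ∀ z ∈ insert p (Iio m), z ∈ Γ univ → z ∈ Γ {x}ᶜ :=
    (eventually_all_finite ((finite_Iio m).insert p)).2 fun z _ =>
      eventually_imp_distrib_left.2 fun hz =>
        complFilter_le_atTop (hΓ.eventually_mem_compl_singleton hz)
  obtain ⟨x, ⟨hx, hmx⟩, hxA⟩ := ((hsmall.and (complFilter_le_atTop (eventually_ge_atTop m))).and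
    eventually_notMem_complFilter).exists
  have hle : Γ univ ⊆ Γ {x}ᶜ := hΓ.subset_of_forall_mem hp fun z hz hzΓ => by
    rcases lt_or_ge z m with hzm | hmz
    · exact hx z (mem_insert_of_mem p hzm) hzΓ
    · rcases hz with rfl | hzA
      exacts [hx z (mem_insert z _) hzΓ, hm x hmx hxA z hmz hzA]
  have hce : CeSet {x}ᶜ := ceSet_iff_rePred.2 <|
    rePred_comp uniformlyCE_compl_singleton ((Computable.const x).pair Computable.id)
  have huniv : CeSet univ := by
    simpa using ceSet_of_primrecPred (Primrec.eq.comp Primrec.id Primrec.id)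
  have hsat := hΓ.injective huniv hce (hle.antisymm (hΓ.monotone (subset_univ _)))
  have hxsat : x ∈ saturation (EA B) {x}ᶜ :=
    hsat ▸ subset_saturation (equivalence_EA B) univ (mem_univ x)
  exact (mem_saturation_EA_of_notMem fun hxB => hxA (hBA.1 hxB)).1 hxsat rfl

theorem MaximalSet.not_fsJump_reduces (hA : MaximalSet A) (hBA : B ⊂ A) :
    ¬ Reduces (FSJump (EA B)) (FSJump (EA A)) := fun hred =>
  let ⟨_, hΓ⟩ := exists_jumpOperator (equivalence_EA B) (equivalence_EA A) hA.1.rePred_EA hred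
  hA.not_jumpOperator hBA hΓ

end JumpOfMaximal

theorem jump_EA_lt_jump_EB_of_maximal_general (A B : Set ℕ) (hA : MaximalSet A) (hBA : B ⊂ A) :
    (Reduces (FSJump (EA A)) (FSJump (EA B)) ∧
      ¬ Reduces (FSJump (EA B)) (FSJump (EA A))) ∧
    ¬ (Reduces (FSJump (EA A)) eqCE ∧ Reduces eqCE (FSJump (EA A))) := by
  refine ⟨⟨?_, hA.not_fsJump_reduces hBA⟩, fun ⟨_, heqCE⟩ => ?_⟩
  · exact fsJump_reduces_fsJump_of_le (equivalence_EA A) (equivalence_EA B) hA.1.rePred_EA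
      (EA_mono hBA.1)
  · have hEq : Reduces (FSJump (EA ∅)) eqCE :=
      fsJump_reduces_eqCE (equivalence_EA ∅) (ceSet_of_finite finite_empty).rePred_EA
    have hempty : ∅ ⊂ A := empty_ssubset.2 hA.infinite.nonempty
    exact hA.not_fsJump_reduces hempty (hEq.trans heqCE)

/-- If `A` is maximal and `B ⊊ A` is c.e., then `(E_A)⁺ < (E_B)⁺`; in particular
`E_A` is not high for the computable FS-jump. -/
theorem jump_EA_lt_jump_EB_of_maximal (A B : Set ℕ) (hA : MaximalSet A)
    (hB : CeSet B) (hBA : B ⊂ A) :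
    (Reduces (FSJump (EA A)) (FSJump (EA B)) ∧
      ¬ Reduces (FSJump (EA B)) (FSJump (EA A))) ∧
    ¬ (Reduces (FSJump (EA A)) eqCE ∧ Reduces eqCE (FSJump (EA A))) :=
  jump_EA_lt_jump_EB_of_maximal_general A B hA hBA
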